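/- arXiv:1910.13358 — 2 statements merged into one kernel-verified Lean document; each statement's English description precedes it below -/
import Mathlib

section
/- Let 𝒳 be a metric space with a fixed base point o, and write ‖x‖ := d(x,o). Let 0 < β ≤ 1. Then for any four points x₁, x₂, x₃, x₄ ∈ 𝒳 (indices interpreted modulo 4), |d(x₁,x₂)^β − d(x₂,x₃)^β + d(x₃,x₄)^β − d(x₄,x₁)^β| ≤ 2 · Σ_{i=1}^{4} min(‖x_i‖^β, ‖x_{i+1}‖^β). -/
/-- Snowflake triangle inequality. -/
lemma snow_tri {X : Type*} [MetricSpace X] (β : ℝ) (hβ0 : 0 < β) (hβ1 : β ≤ 1) (x y z : X) :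
    dist x z ^ β ≤ dist x y ^ β + dist y z ^ β :=
  (Real.rpow_le_rpow dist_nonneg (dist_triangle x y z) hβ0.le).trans
    (Real.rpow_add_le_add_rpow dist_nonneg dist_nonneg hβ0.le hβ1)

lemma snow_bounds {X : Type*} [MetricSpace X] (o : X) (β : ℝ) (hβ0 : 0 < β) (hβ1 : β ≤ 1)
    (x y : X) :
    dist x y ^ β ≤ dist x o ^ β + dist y o ^ β ∧
    dist x o ^ β + dist y o ^ β - 2 * min (dist x o ^ β) (dist y o ^ β) ≤ dist x y ^ β := by
  have h1 := snow_tri β hβ0 hβ1 x o y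
  have h2 := snow_tri β hβ0 hβ1 x y o
  have h3 := snow_tri β hβ0 hβ1 y x o
  rw [dist_comm o y] at h1
  rw [dist_comm y x] at h3
  refine ⟨h1, ?_⟩
  rcases min_choice (dist x o ^ β) (dist y o ^ β) with h | h <;> rw [h] <;> linarith

/-- Let `𝒳` be a metric space with base point `o`, `‖x‖ := dist x o`,
and `0 < β ≤ 1`. Then for any four points `x₁, x₂, x₃, x₄`,
`|d(x₁,x₂)^β − d(x₂,x₃)^β + d(x₃,x₄)^β − d(x₄,x₁)^β|
  ≤ 2 ∑ᵢ min(‖xᵢ‖^β, ‖xᵢ₊₁‖^β)` (indices mod 4). -/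
theorem stmt0 {𝒳 : Type*} [MetricSpace 𝒳] (o : 𝒳) (β : ℝ) (hβ0 : 0 < β) (hβ1 : β ≤ 1)
    (x₁ x₂ x₃ x₄ : 𝒳) :
    |dist x₁ x₂ ^ β - dist x₂ x₃ ^ β + dist x₃ x₄ ^ β - dist x₄ x₁ ^ β| ≤
      2 * (min (dist x₁ o ^ β) (dist x₂ o ^ β) + min (dist x₂ o ^ β) (dist x₃ o ^ β)
        + min (dist x₃ o ^ β) (dist x₄ o ^ β) + min (dist x₄ o ^ β) (dist x₁ o ^ β)) := by
  obtain ⟨a1, b1⟩ := snow_bounds o β hβ0 hβ1 x₁ x₂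
  obtain ⟨a2, b2⟩ := snow_bounds o β hβ0 hβ1 x₂ x₃
  obtain ⟨a3, b3⟩ := snow_bounds o β hβ0 hβ1 x₃ x₄
  obtain ⟨a4, b4⟩ := snow_bounds o β hβ0 hβ1 x₄ x₁
  have hn : ∀ x y : 𝒳, 0 ≤ min (dist x o ^ β) (dist y o ^ β) := fun x y =>
    le_min (Real.rpow_nonneg dist_nonneg _) (Real.rpow_nonneg dist_nonneg _)
  have n1 := hn x₁ x₂
  have n2 := hn x₂ x₃
  have n3 := hn x₃ x₄
  have n4 := hn x₄ x₁
  rw [abs_le]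
  constructor <;> linarith
end

section
/- Let β > 0 and β* := max(β, 2β−2). Let (X,Y) and (X⁽ⁿ⁾,Y⁽ⁿ⁾), n ≥ 1, be pairs of random variables in 𝒳×𝒴 such that (X⁽ⁿ⁾,Y⁽ⁿ⁾) converges in distribution to (X,Y) as n → ∞. Assume further that either (i) the families (‖X⁽ⁿ⁾‖^{β*})_n and (‖Y⁽ⁿ⁾‖^{β*})_n are uniformly integrable, or (ii) E‖X⁽ⁿ⁾‖^{β*} → E‖X‖^{β*} < ∞ and E‖Y⁽ⁿ⁾‖^{β*} → E‖Y‖^{β*} < ∞. Then hDC_β(X⁽ⁿ⁾,Y⁽ⁿ⁾) → hDC_β(X,Y) as n → ∞. -/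
open MeasureTheory ProbabilityTheory Filter

noncomputable section

/-- The β-distance covariance `hDC_β` of a distribution `ν` on `𝒳 × 𝒴`:
`hDC_β := (1/4)·E[ĥ_X ĥ_Y]`, where the expectation is taken with respect to four
independent copies of a pair with distribution `ν` (realized on the product space). -/
def hDCMeasure (β : ℝ) {𝒳 𝒴 : Type*} [MetricSpace 𝒳] [MetricSpace 𝒴]
    [MeasurableSpace 𝒳] [MeasurableSpace 𝒴] (ν : Measure (𝒳 × 𝒴)) : ℝ :=
  (1 / 4) * ∫ z : Fin 4 → 𝒳 × 𝒴,
    (dist (z 0).1 (z 1).1 ^ β - dist (z 1).1 (z 2).1 ^ β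
      + dist (z 2).1 (z 3).1 ^ β - dist (z 3).1 (z 0).1 ^ β) *
    (dist (z 0).2 (z 1).2 ^ β - dist (z 1).2 (z 2).2 ^ β
      + dist (z 2).2 (z 3).2 ^ β - dist (z 3).2 (z 0).2 ^ β)
    ∂(Measure.pi fun _ => ν)

lemma aux_rpow_lip {β N p q : ℝ} (hβ : 1 ≤ β) (hp : 0 ≤ p) (hq : 0 ≤ q) (hpN : p ≤ N)
    (hqN : q ≤ N) : |p ^ β - q ^ β| ≤ β * N ^ (β - 1) * |p - q| := by
  have h := Convex.norm_image_sub_le_of_norm_hasDerivWithin_le (f := fun x : ℝ => x ^ β)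
    (f' := fun x => β * x ^ (β - 1)) (C := β * N ^ (β - 1)) (s := Set.Icc 0 N) (x := q) (y := p)
    (fun x _ => (Real.hasDerivAt_rpow_const (Or.inr hβ)).hasDerivWithinAt)
    (fun x hx => by
      have h1 : 0 ≤ x ^ (β - 1) := Real.rpow_nonneg hx.1 _
      rw [Real.norm_eq_abs, abs_of_nonneg (by positivity)]
      have := Real.rpow_le_rpow hx.1 hx.2 (by linarith : 0 ≤ β - 1)
      gcongr)
    (convex_Icc _ _) ⟨hq, hqN⟩ ⟨hp, hpN⟩
  simpa [Real.norm_eq_abs] using h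

lemma aux_rpow_holder {β p q d : ℝ} (hβ : 0 < β) (hβ1 : β ≤ 1) (hp : 0 ≤ p) (hq : 0 ≤ q)
    (hd : 0 ≤ d) (h1 : p ≤ q + d) (h2 : q ≤ p + d) : |p ^ β - q ^ β| ≤ d ^ β := by
  have a1 := (Real.rpow_le_rpow hp h1 hβ.le).trans (Real.rpow_add_le_add_rpow hq hd hβ.le hβ1)
  have a2 := (Real.rpow_le_rpow hq h2 hβ.le).trans (Real.rpow_add_le_add_rpow hp hd hβ.le hβ1)
  rw [abs_le]; constructor <;> linarith

lemma aux_rpow_add {s p q : ℝ} (hs : 0 ≤ s) (hp : 0 ≤ p) (hq : 0 ≤ q) :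
    (p + q) ^ s ≤ 2 ^ s * (p ^ s + q ^ s) := by
  have hp' := Real.rpow_nonneg hp s
  have hq' := Real.rpow_nonneg hq s
  rcases le_total p q with h | h
  · calc (p + q) ^ s ≤ (2 * q) ^ s := Real.rpow_le_rpow (by linarith) (by linarith) hs
      _ = 2 ^ s * q ^ s := Real.mul_rpow (by norm_num) hq
      _ ≤ _ := by gcongr; linarith
  · calc (p + q) ^ s ≤ (2 * p) ^ s := Real.rpow_le_rpow (by linarith) (by linarith) hs
      _ = 2 ^ s * p ^ s := Real.mul_rpow (by norm_num) hp
      _ ≤ _ := by gcongr; linarith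

lemma aux_mM {β m M : ℝ} (hβ : 1 ≤ β) (hm : 0 ≤ m) (hmM : m ≤ M) :
    (M ^ (β - 1) * m) ^ 2 ≤ (1 + M ^ max β (2 * β - 2)) * (1 + m ^ max β (2 * β - 2)) := by
  have hM : 0 ≤ M := hm.trans hmM
  rcases hm.eq_or_lt with h0 | h0
  · subst h0
    have := Real.rpow_nonneg hM (max β (2 * β - 2))
    have := Real.rpow_nonneg hm (max β (2 * β - 2))
    rw [mul_zero, zero_pow two_ne_zero]; positivity
  have hM0 : 0 < M := h0.trans_le hmM
  have e : (M ^ (β - 1) * m) ^ 2 = M ^ (2 * β - 2) * m ^ (2 : ℝ) := by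
    rw [mul_pow, ← Real.rpow_natCast (M ^ (β - 1)) 2, ← Real.rpow_mul hM, Real.rpow_two]
    congr 2; push_cast; ring
  rw [e]
  rcases le_total β 2 with h2 | h2
  · rw [max_eq_left (by linarith)]
    have : m ^ (2 : ℝ) = m ^ β * m ^ (2 - β) := by
      rw [← Real.rpow_add h0]; congr 1; ring
    have h3 : m ^ (2 - β) ≤ M ^ (2 - β) := Real.rpow_le_rpow hm hmM (by linarith)
    have h4 : M ^ (2 * β - 2) * M ^ (2 - β) = M ^ β := by
      rw [← Real.rpow_add hM0]; congr 1; ring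
    have p1 : 0 < M ^ β := Real.rpow_pos_of_pos hM0 _
    have p2 : 0 < m ^ β := Real.rpow_pos_of_pos h0 _
    calc M ^ (2 * β - 2) * m ^ (2 : ℝ) = M ^ (2 * β - 2) * (m ^ β * m ^ (2 - β)) := by rw [this]
      _ ≤ M ^ (2 * β - 2) * (m ^ β * M ^ (2 - β)) := by gcongr
      _ = M ^ β * m ^ β := by rw [← h4]; ring
      _ ≤ _ := by nlinarith
  · rw [max_eq_right (by linarith)]
    have p1 : 0 < M ^ (2 * β - 2) := Real.rpow_pos_of_pos hM0 _
    have p2 : 0 < m ^ (2 * β - 2) := Real.rpow_pos_of_pos h0 _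
    have : m ^ (2 : ℝ) ≤ 1 + m ^ (2 * β - 2) := by
      rcases le_total m 1 with h1 | h1
      · have := Real.rpow_le_one hm h1 (by norm_num : (0:ℝ) ≤ 2)
        linarith
      · have := Real.rpow_le_rpow_of_exponent_le h1 (by linarith : (2:ℝ) ≤ 2 * β - 2)
        linarith
    gcongr
    linarith

lemma aux_hbound (β : ℝ) (hβ : 0 < β) : ∃ K : ℝ, 0 ≤ K ∧
    ∀ {S : Type*} [MetricSpace S] (o a b c d : S),
    (dist a b ^ β - dist b c ^ β + dist c d ^ β - dist d a ^ β) ^ 2 ≤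
      K * (((1 + dist a o ^ max β (2 * β - 2)) + (1 + dist c o ^ max β (2 * β - 2))) *
      ((1 + dist b o ^ max β (2 * β - 2)) + (1 + dist d o ^ max β (2 * β - 2)))) := by
  set s := max β (2 * β - 2) with hs
  have hs0 : 0 ≤ s := hβ.le.trans (le_max_left _ _)
  rcases le_total β 1 with hb | hb
  · have hsβ : s = β := max_eq_left (by linarith)
    rw [hsβ]
    refine ⟨4, by norm_num, ?_⟩
    intro S _ o a b c d
    have na := Real.rpow_nonneg (dist_nonneg (x := a) (y := o)) β
    have nb := Real.rpow_nonneg (dist_nonneg (x := b) (y := o)) β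
    have nc := Real.rpow_nonneg (dist_nonneg (x := c) (y := o)) β
    have nd := Real.rpow_nonneg (dist_nonneg (x := d) (y := o)) β
    have key : ∀ x y z : S, |dist x y ^ β - dist y z ^ β| ≤ dist x o ^ β + dist z o ^ β := by
      intro x y z
      refine (aux_rpow_holder hβ hb dist_nonneg dist_nonneg (dist_nonneg (x := x) (y := z))
        ?_ ?_).trans ?_
      · have := dist_triangle x z y; rw [dist_comm z y] at this; linarith
      · have := dist_triangle y x z; rw [dist_comm y x] at this; linarith
      · refine (Real.rpow_le_rpow dist_nonneg (dist_triangle_right x z o) hβ.le).trans ?_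
        exact Real.rpow_add_le_add_rpow dist_nonneg dist_nonneg hβ.le hb
    have k1 := abs_le.1 (key a b c)
    have k2 := abs_le.1 (key c d a)
    have k3 := abs_le.1 (key b c d)
    have k4 := abs_le.1 (key d a b)
    set h := dist a b ^ β - dist b c ^ β + dist c d ^ β - dist d a ^ β with hh
    have b1 : |h| ≤ 2 * (dist a o ^ β + dist c o ^ β) := by
      rw [abs_le]; constructor <;> linarith
    have b2 : |h| ≤ 2 * (dist b o ^ β + dist d o ^ β) := by
      rw [abs_le]; constructor <;> linarith
    rw [← sq_abs]
    have := mul_le_mul b1 b2 (abs_nonneg _) (by positivity)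
    nlinarith
  · refine ⟨(2 * β * 2 ^ (β - 1)) ^ 2 * ((2 ^ s) * (2 ^ s)), by positivity, ?_⟩
    intro S _ o a b c d
    have na := Real.rpow_nonneg (dist_nonneg (x := a) (y := o)) s
    have nb := Real.rpow_nonneg (dist_nonneg (x := b) (y := o)) s
    have nc := Real.rpow_nonneg (dist_nonneg (x := c) (y := o)) s
    have nd := Real.rpow_nonneg (dist_nonneg (x := d) (y := o)) s
    set A := dist a o + dist c o with hA
    set B := dist b o + dist d o with hB
    have hA0 : 0 ≤ A := by positivity
    have hB0 : 0 ≤ B := by positivity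
    have pa := dist_nonneg (x := a) (y := o)
    have pb := dist_nonneg (x := b) (y := o)
    have pc := dist_nonneg (x := c) (y := o)
    have pd := dist_nonneg (x := d) (y := o)
    have tab := dist_triangle_right a b o
    have tbc := dist_triangle_right b c o
    have tcd := dist_triangle_right c d o
    have tda := dist_triangle_right d a o
    have key : ∀ x y z : S, dist x y ≤ A + B → dist y z ≤ A + B →
        |dist x y ^ β - dist y z ^ β| ≤ β * (A + B) ^ (β - 1) * (dist x o + dist z o) := by
      intro x y z h1 h2
      refine (aux_rpow_lip hb dist_nonneg dist_nonneg h1 h2).trans ?_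
      have : |dist x y - dist y z| ≤ dist x o + dist z o := by
        have t0 := dist_triangle_right x z o
        have t1 := dist_triangle x z y
        have t2 := dist_triangle y x z
        rw [dist_comm z y] at t1
        rw [dist_comm y x] at t2
        rw [abs_le]; constructor <;> linarith
      gcongr
    have k1 := abs_le.1 (key a b c (by linarith) (by linarith))
    have k2 := abs_le.1 (key c d a (by linarith) (by linarith))
    have k3 := abs_le.1 (key b c d (by linarith) (by linarith))
    have k4 := abs_le.1 (key d a b (by linarith) (by linarith))
    set h := dist a b ^ β - dist b c ^ β + dist c d ^ β - dist d a ^ β with hh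
    rw [add_comm (dist c o) (dist a o), ← hA] at k2
    rw [add_comm (dist d o) (dist b o), ← hB] at k4
    rw [← hA] at k1
    rw [← hB] at k3
    have b1 : |h| ≤ 2 * (β * (A + B) ^ (β - 1) * A) := by
      rw [abs_le]; constructor <;> linarith
    have b2 : |h| ≤ 2 * (β * (A + B) ^ (β - 1) * B) := by
      rw [abs_le]; constructor <;> linarith
    have hAs := Real.rpow_nonneg hA0 s
    have hBs := Real.rpow_nonneg hB0 s
    have two1 : (1:ℝ) ≤ 2 ^ s := Real.one_le_rpow (by norm_num) hs0
    have gA : 1 + A ^ s ≤ 2 ^ s * ((1 + dist a o ^ s) + (1 + dist c o ^ s)) := by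
      have := aux_rpow_add hs0 pa pc
      rw [← hA] at this
      linarith
    have gB : 1 + B ^ s ≤ 2 ^ s * ((1 + dist b o ^ s) + (1 + dist d o ^ s)) := by
      have := aux_rpow_add hs0 pb pd
      rw [← hB] at this
      linarith
    have main : h ^ 2 ≤ (2 * β * 2 ^ (β - 1)) ^ 2 * ((1 + A ^ s) * (1 + B ^ s)) := by
      have gen : ∀ m M : ℝ, 0 ≤ m → m ≤ M → A + B ≤ 2 * M →
          |h| ≤ 2 * (β * (A + B) ^ (β - 1) * m) →
          h ^ 2 ≤ (2 * β * 2 ^ (β - 1)) ^ 2 * ((1 + M ^ s) * (1 + m ^ s)) := by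
        intro m M hm hmM hAB hle
        have e1 : (A + B) ^ (β - 1) ≤ 2 ^ (β - 1) * M ^ (β - 1) := by
          rw [← Real.mul_rpow (by norm_num) (hm.trans hmM)]
          exact Real.rpow_le_rpow (by linarith) hAB (by linarith)
        have e2 : |h| ≤ (2 * β * 2 ^ (β - 1)) * (M ^ (β - 1) * m) := by
          calc |h| ≤ 2 * (β * (A + B) ^ (β - 1) * m) := hle
            _ ≤ 2 * (β * (2 ^ (β - 1) * M ^ (β - 1)) * m) := by gcongr
            _ = _ := by ring
        rw [← sq_abs]
        calc |h| ^ 2 ≤ ((2 * β * 2 ^ (β - 1)) * (M ^ (β - 1) * m)) ^ 2 := by gcongr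
          _ = (2 * β * 2 ^ (β - 1)) ^ 2 * (M ^ (β - 1) * m) ^ 2 := by ring
          _ ≤ _ := by gcongr; exact aux_mM hb hm hmM
      rcases le_total A B with hab | hab
      · have := gen A B hA0 hab (by linarith) b1
        rwa [mul_comm (1 + B ^ s)] at this
      · exact gen B A hB0 hab (by linarith) b2
    refine main.trans ?_
    rw [mul_assoc ((2 * β * 2 ^ (β - 1)) ^ 2)]
    gcongr _ * ?_
    calc (1 + A ^ s) * (1 + B ^ s) ≤ (2 ^ s * ((1 + dist a o ^ s) + (1 + dist c o ^ s))) *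
          (2 ^ s * ((1 + dist b o ^ s) + (1 + dist d o ^ s))) := by gcongr
      _ = _ := by ring

lemma aux_fatou {E : Type*} [MeasurableSpace E] [TopologicalSpace E] [OpensMeasurableSpace E]
    [HasOuterApproxClosed E] {ν : ProbabilityMeasure E} {νs : ℕ → ProbabilityMeasure E}
    (h : Tendsto νs atTop (nhds ν)) {f : E → ℝ} (hf : Continuous f) (hf0 : 0 ≤ f) :
    ∫⁻ x, ENNReal.ofReal (f x) ∂(ν : Measure E) ≤
      atTop.liminf (fun n => ∫⁻ x, ENNReal.ofReal (f x) ∂(νs n : Measure E)) :=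
  lintegral_le_liminf_lintegral_of_forall_isOpen_measure_le_liminf_measure hf hf0
    (fun _ hG => ProbabilityMeasure.le_liminf_measure_open_of_tendsto h hG)

lemma aux_lsc {E : Type*} [MeasurableSpace E] [TopologicalSpace E] [OpensMeasurableSpace E]
    [HasOuterApproxClosed E] {ν : ProbabilityMeasure E} {νs : ℕ → ProbabilityMeasure E}
    (h : Tendsto νs atTop (nhds ν)) {f : E → ℝ} (hf : Continuous f) (hf0 : 0 ≤ f)
    (hi : Integrable f (ν : Measure E)) (y : ℝ) (hy : y < ∫ x, f x ∂(ν : Measure E)) :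
    ∀ᶠ n in atTop, Integrable f (νs n : Measure E) → y < ∫ x, f x ∂(νs n : Measure E) := by
  rcases lt_or_ge y 0 with h0 | h0
  · exact Eventually.of_forall fun n _ => h0.trans_le (integral_nonneg hf0)
  have h1 : ENNReal.ofReal y < atTop.liminf
      (fun n => ∫⁻ x, ENNReal.ofReal (f x) ∂(νs n : Measure E)) := by
    refine lt_of_lt_of_le ?_ (aux_fatou h hf hf0)
    rw [← ofReal_integral_eq_lintegral_ofReal hi (Eventually.of_forall hf0)]
    exact (ENNReal.ofReal_lt_ofReal_iff (h0.trans_lt hy)).2 hy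
  filter_upwards [eventually_lt_of_lt_liminf h1] with n hn hin
  rw [← ofReal_integral_eq_lintegral_ofReal hin (Eventually.of_forall hf0)] at hn
  exact (ENNReal.ofReal_lt_ofReal_iff_of_nonneg h0).1 hn

lemma aux_dct {E : Type*} [MeasurableSpace E] [TopologicalSpace E] [OpensMeasurableSpace E]
    [HasOuterApproxClosed E] {ν : ProbabilityMeasure E} {νs : ℕ → ProbabilityMeasure E}
    (h : Tendsto νs atTop (nhds ν)) {F H : E → ℝ} (hF : Continuous F) (hH : Continuous H)
    (hFH : ∀ x, |F x| ≤ H x)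
    (hfin : ∫⁻ x, ENNReal.ofReal (H x) ∂(ν : Measure E) < ⊤)
    (ht : Tendsto (fun n => ∫⁻ x, ENNReal.ofReal (H x) ∂(νs n : Measure E)) atTop
      (nhds (∫⁻ x, ENNReal.ofReal (H x) ∂(ν : Measure E)))) :
    Tendsto (fun n => ∫ x, F x ∂(νs n : Measure E)) atTop (nhds (∫ x, F x ∂(ν : Measure E))) := by
  have hH0 : ∀ x, 0 ≤ H x := fun x => (abs_nonneg _).trans (hFH x)
  have hint : ∀ ρ : Measure E, ∫⁻ x, ENNReal.ofReal (H x) ∂ρ < ⊤ → Integrable H ρ := by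
    intro ρ hρ
    refine ⟨hH.measurable.aestronglyMeasurable, ?_⟩
    rw [hasFiniteIntegral_iff_ofReal (Eventually.of_forall hH0)]
    exact hρ
  have hintF : ∀ ρ : Measure E, Integrable H ρ → Integrable F ρ := fun ρ hρ =>
    hρ.mono' hF.measurable.aestronglyMeasurable (Eventually.of_forall hFH)
  have hev : ∀ᶠ n in atTop, Integrable H (νs n : Measure E) :=
    (ht.eventually_lt_const hfin).mono fun n hn => hint _ hn
  have hHt : Tendsto (fun n => ∫ x, H x ∂(νs n : Measure E)) atTop
      (nhds (∫ x, H x ∂(ν : Measure E))) := by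
    have := (ENNReal.tendsto_toReal hfin.ne).comp ht
    simp_rw [integral_eq_lintegral_of_nonneg_ae (Eventually.of_forall hH0)
      hH.measurable.aestronglyMeasurable]
    exact this
  have hHi := hint _ hfin
  have hFi := hintF _ hHi
  have p1 := aux_lsc h (hH.add hF) (fun x => by
    have := abs_le.1 (hFH x); simp only [Pi.zero_apply, Pi.add_apply]; linarith) (hHi.add hFi)
  have p2 := aux_lsc h (hH.sub hF) (fun x => by
    have := abs_le.1 (hFH x); simp only [Pi.zero_apply, Pi.sub_apply]; linarith) (hHi.sub hFi)
  simp only [Pi.add_apply, Pi.sub_apply] at p1 p2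
  rw [integral_add hHi hFi] at p1
  rw [integral_sub hHi hFi] at p2
  rw [tendsto_order]
  constructor
  · intro y hy
    set δ := (∫ x, F x ∂(ν : Measure E) - y) / 2 with hδ
    have hδ0 : 0 < δ := by linarith
    filter_upwards [hev, p1 (∫ x, H x ∂(ν : Measure E) + y + δ) (by linarith),
      hHt.eventually_lt_const (by linarith : _ < ∫ x, H x ∂(ν : Measure E) + δ)] with n h1 h2 h3
    have h4 := hintF _ h1
    have h5 := h2 (h1.add h4)
    rw [integral_add h1 h4] at h5
    linarith
  · intro y hy
    set δ := (y - ∫ x, F x ∂(ν : Measure E)) / 2 with hδ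
    have hδ0 : 0 < δ := by linarith
    filter_upwards [hev, p2 (∫ x, H x ∂(ν : Measure E) - y + δ) (by linarith),
      hHt.eventually_lt_const (by linarith : _ < ∫ x, H x ∂(ν : Measure E) + δ)] with n h1 h2 h3
    have h4 := hintF _ h1
    have h5 := h2 (h1.sub h4)
    rw [integral_sub h1 h4] at h5
    linarith

lemma aux_ui {Ω E : Type*} [MeasurableSpace Ω] (μ : Measure Ω) [IsProbabilityMeasure μ]
    [MeasurableSpace E] [TopologicalSpace E] [OpensMeasurableSpace E]
    (Z : Ω → E) (Zs : ℕ → Ω → E) (hZ : Measurable Z) (hZs : ∀ n, Measurable (Zs n))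
    (hconv : ∀ g : BoundedContinuousFunction E ℝ,
      Tendsto (fun n => ∫ ω, g (Zs n ω) ∂μ) atTop (nhds (∫ ω, g (Z ω) ∂μ)))
    {f : E → ℝ} (hf : Continuous f) (hf0 : 0 ≤ f)
    (hfat : ∫⁻ ω, ENNReal.ofReal (f (Z ω)) ∂μ ≤
      atTop.liminf (fun n => ∫⁻ ω, ENNReal.ofReal (f (Zs n ω)) ∂μ))
    (hui : UniformIntegrable (fun n ω => f (Zs n ω)) 1 μ) :
    (∫⁻ ω, ENNReal.ofReal (f (Z ω)) ∂μ < ⊤) ∧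
      Tendsto (fun n => ∫⁻ ω, ENNReal.ofReal (f (Zs n ω)) ∂μ) atTop
        (nhds (∫⁻ ω, ENNReal.ofReal (f (Z ω)) ∂μ)) := by
  have henorm : ∀ x, ‖f x‖ₑ = ENNReal.ofReal (f x) := fun x => Real.enorm_of_nonneg (hf0 x)
  constructor
  · obtain ⟨M, hM⟩ := hui.2.2
    refine hfat.trans_lt (lt_of_le_of_lt ?_ (ENNReal.coe_lt_top (r := M)))
    refine liminf_le_of_frequently_le' (Eventually.of_forall fun n => ?_).frequently
    have := hM n
    rw [eLpNorm_one_eq_lintegral_enorm] at this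
    simpa only [henorm] using this
  · refine tendsto_of_le_liminf_of_limsup_le hfat ?_
    refine ENNReal.le_of_forall_pos_le_add fun ε hε _ => ?_
    obtain ⟨C, hC⟩ := hui.spec one_ne_zero ENNReal.one_ne_top (ε := ε / 2) (by positivity)
    -- truncated function
    let g : BoundedContinuousFunction E ℝ := BoundedContinuousFunction.ofNormedAddCommGroup
      (fun x => min (f x) C) (by fun_prop) C (fun x => by
        have h0 : 0 ≤ min (f x) (C : ℝ) := le_min (hf0 x) C.2
        rw [Real.norm_eq_abs, abs_of_nonneg h0]; exact min_le_right _ _)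
    have hg0 : ∀ x, 0 ≤ g x := fun x => le_min (hf0 x) C.2
    have hgi : ∀ W : Ω → E, Measurable W → ENNReal.ofReal (∫ ω, g (W ω) ∂μ) =
        ∫⁻ ω, ENNReal.ofReal (g (W ω)) ∂μ := by
      intro W hW
      refine ofReal_integral_eq_lintegral_ofReal ?_ (Eventually.of_forall fun ω => hg0 _)
      refine Integrable.of_bound (C := (C : ℝ))
        (g.continuous.measurable.comp hW).aestronglyMeasurable (Eventually.of_forall fun ω => ?_)
      rw [Real.norm_eq_abs, abs_of_nonneg (hg0 _)]; exact min_le_right _ _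
    have hgt : Tendsto (fun n => ∫⁻ ω, ENNReal.ofReal (g (Zs n ω)) ∂μ) atTop
        (nhds (∫⁻ ω, ENNReal.ofReal (g (Z ω)) ∂μ)) := by
      have := (ENNReal.continuous_ofReal.tendsto _).comp (hconv g)
      rw [hgi Z hZ] at this
      refine this.congr fun n => ?_
      exact hgi _ (hZs n)
    have hgf : ∫⁻ ω, ENNReal.ofReal (g (Z ω)) ∂μ ≤ ∫⁻ ω, ENNReal.ofReal (f (Z ω)) ∂μ :=
      lintegral_mono fun ω => ENNReal.ofReal_le_ofReal (min_le_left _ _)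
    have hsplit : ∀ n, ∫⁻ ω, ENNReal.ofReal (f (Zs n ω)) ∂μ ≤
        ∫⁻ ω, ENNReal.ofReal (g (Zs n ω)) ∂μ + ENNReal.ofReal (ε / 2) := by
      intro n
      refine le_trans ?_ (add_le_add le_rfl (hC n))
      have hmg : Measurable fun ω => ENNReal.ofReal (g (Zs n ω)) :=
        ENNReal.measurable_ofReal.comp (g.continuous.measurable.comp (hZs n))
      rw [eLpNorm_one_eq_lintegral_enorm, ← lintegral_add_left hmg]
      refine lintegral_mono fun ω => ?_
      by_cases hc : (C : ℝ) ≤ f (Zs n ω)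
      · refine le_add_left ?_
        rw [Set.indicator_of_mem, henorm]
        change C ≤ ‖f (Zs n ω)‖₊
        rw [← NNReal.coe_le_coe, coe_nnnorm, Real.norm_of_nonneg (hf0 _)]
        exact hc
      · refine le_add_right ?_
        refine ENNReal.ofReal_le_ofReal ?_
        exact le_min le_rfl (not_le.1 hc).le
    have hlim := hgt.add_const (ENNReal.ofReal (ε / 2))
    calc limsup (fun n => ∫⁻ ω, ENNReal.ofReal (f (Zs n ω)) ∂μ) atTop
        ≤ limsup (fun n => ∫⁻ ω, ENNReal.ofReal (g (Zs n ω)) ∂μ + ENNReal.ofReal (ε / 2)) atTop :=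
          limsup_le_limsup (Eventually.of_forall hsplit)
      _ = _ := hlim.limsup_eq
      _ ≤ _ := by
        refine add_le_add hgf ?_
        rw [← ENNReal.ofReal_coe_nnreal]
        exact ENNReal.ofReal_le_ofReal (by have : (0:ℝ) < ε := hε
                                           linarith)

lemma aux_prod {E : Type*} [MeasurableSpace E] (ν : Measure E) [IsProbabilityMeasure ν]
    {w : E → ℝ} (hw : Measurable w) (hw0 : ∀ x, 0 ≤ w x) {K : ℝ} (hK : 0 ≤ K) :
    ∫⁻ z : Fin 4 → E, ENNReal.ofReal (K * ((w (z 0) + w (z 2)) * (w (z 1) + w (z 3))))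
      ∂(Measure.pi fun _ => ν) =
    ENNReal.ofReal K * ((∫⁻ x, ENNReal.ofReal (w x) ∂ν + ∫⁻ x, ENNReal.ofReal (w x) ∂ν) *
      (∫⁻ x, ENNReal.ofReal (w x) ∂ν + ∫⁻ x, ENNReal.ofReal (w x) ∂ν)) := by
  have hm : Measurable fun x => ENNReal.ofReal (w x) := hw.ennreal_ofReal
  have hme : ∀ i : Fin 4, Measurable fun z : Fin 4 → E => ENNReal.ofReal (w (z i)) :=
    fun i => hm.comp (measurable_pi_apply i)
  have hind : iIndepFun (fun (i : Fin 4) (z : Fin 4 → E) => ENNReal.ofReal (w (z i)))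
      (Measure.pi fun _ => ν) := iIndepFun_pi (X := fun _ x => ENNReal.ofReal (w x))
        (fun _ => hm.aemeasurable)
  have hone : ∀ i : Fin 4, ∫⁻ z : Fin 4 → E, ENNReal.ofReal (w (z i)) ∂(Measure.pi fun _ => ν) =
      ∫⁻ x, ENNReal.ofReal (w x) ∂ν := fun i =>
    (measurePreserving_eval (fun _ : Fin 4 => ν) i).lintegral_comp hm
  have htwo : ∀ i j : Fin 4, i ≠ j → ∫⁻ z : Fin 4 → E,
      ENNReal.ofReal (w (z i)) * ENNReal.ofReal (w (z j)) ∂(Measure.pi fun _ => ν) =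
      (∫⁻ x, ENNReal.ofReal (w x) ∂ν) * ∫⁻ x, ENNReal.ofReal (w x) ∂ν := by
    intro i j hij
    have := lintegral_mul_eq_lintegral_mul_lintegral_of_indepFun (hme i) (hme j)
      (hind.indepFun hij)
    simp only [Pi.mul_apply, hone] at this
    exact this
  have e : ∀ z : Fin 4 → E, ENNReal.ofReal (K * ((w (z 0) + w (z 2)) * (w (z 1) + w (z 3)))) =
      ENNReal.ofReal K * (ENNReal.ofReal (w (z 0)) * ENNReal.ofReal (w (z 1)) +
      (ENNReal.ofReal (w (z 0)) * ENNReal.ofReal (w (z 3)) +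
      (ENNReal.ofReal (w (z 2)) * ENNReal.ofReal (w (z 1)) +
      ENNReal.ofReal (w (z 2)) * ENNReal.ofReal (w (z 3))))) := by
    intro z
    rw [ENNReal.ofReal_mul hK, ENNReal.ofReal_mul (add_nonneg (hw0 _) (hw0 _)),
      ENNReal.ofReal_add (hw0 _) (hw0 _), ENNReal.ofReal_add (hw0 _) (hw0 _)]
    ring
  simp_rw [e]
  rw [lintegral_const_mul _ (by fun_prop), lintegral_add_left (by fun_prop),
    lintegral_add_left (by fun_prop), lintegral_add_left (by fun_prop),
    htwo _ _ (by decide), htwo _ _ (by decide), htwo _ _ (by decide), htwo _ _ (by decide)]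
  ring

set_option maxHeartbeats 2000000 in
/-- Let `β > 0`, `β* := max(β, 2β−2)`. Let `(X,Y)` and `(X⁽ⁿ⁾,Y⁽ⁿ⁾)`
be pairs of random variables in `𝒳×𝒴` with `(X⁽ⁿ⁾,Y⁽ⁿ⁾) → (X,Y)` in distribution.
If either (i) `(‖X⁽ⁿ⁾‖^{β*})ₙ` and `(‖Y⁽ⁿ⁾‖^{β*})ₙ` are uniformly integrable, or
(ii) `E‖X⁽ⁿ⁾‖^{β*} → E‖X‖^{β*} < ∞` and `E‖Y⁽ⁿ⁾‖^{β*} → E‖Y‖^{β*} < ∞`, then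
`hDC_β(X⁽ⁿ⁾,Y⁽ⁿ⁾) → hDC_β(X,Y)`. -/
theorem stmt7 {Ω : Type*} [MeasurableSpace Ω] (μ : Measure Ω) [IsProbabilityMeasure μ]
    {𝒳 𝒴 : Type*} [MetricSpace 𝒳] [TopologicalSpace.SeparableSpace 𝒳]
    [MeasurableSpace 𝒳] [BorelSpace 𝒳]
    [MetricSpace 𝒴] [TopologicalSpace.SeparableSpace 𝒴]
    [MeasurableSpace 𝒴] [BorelSpace 𝒴]
    (o𝒳 : 𝒳) (o𝒴 : 𝒴) (β : ℝ) (hβ : 0 < β)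
    (Z : Ω → 𝒳 × 𝒴) (Zseq : ℕ → Ω → 𝒳 × 𝒴)
    (hZm : Measurable Z) (hZseqm : ∀ n, Measurable (Zseq n))
    -- convergence in distribution of `(X⁽ⁿ⁾,Y⁽ⁿ⁾)` to `(X,Y)`:
    (hconv : ∀ g : BoundedContinuousFunction (𝒳 × 𝒴) ℝ,
      Tendsto (fun n => ∫ ω, g (Zseq n ω) ∂μ) atTop (nhds (∫ ω, g (Z ω) ∂μ)))
    (hmoment :
      -- (i) uniform integrability of `‖X⁽ⁿ⁾‖^{β*}` and `‖Y⁽ⁿ⁾‖^{β*}`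
      (UniformIntegrable (fun n ω => dist (Zseq n ω).1 o𝒳 ^ max β (2 * β - 2)) 1 μ ∧
        UniformIntegrable (fun n ω => dist (Zseq n ω).2 o𝒴 ^ max β (2 * β - 2)) 1 μ) ∨
      -- (ii) convergence of `β*`-moments to the (finite) `β*`-moments of `(X,Y)`
      ((∫⁻ ω, ENNReal.ofReal (dist (Z ω).1 o𝒳 ^ max β (2 * β - 2)) ∂μ < ⊤) ∧
        (∫⁻ ω, ENNReal.ofReal (dist (Z ω).2 o𝒴 ^ max β (2 * β - 2)) ∂μ < ⊤) ∧
        Tendsto (fun n => ∫⁻ ω, ENNReal.ofReal (dist (Zseq n ω).1 o𝒳 ^ max β (2 * β - 2)) ∂μ)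
          atTop (nhds (∫⁻ ω, ENNReal.ofReal (dist (Z ω).1 o𝒳 ^ max β (2 * β - 2)) ∂μ)) ∧
        Tendsto (fun n => ∫⁻ ω, ENNReal.ofReal (dist (Zseq n ω).2 o𝒴 ^ max β (2 * β - 2)) ∂μ)
          atTop (nhds (∫⁻ ω, ENNReal.ofReal (dist (Z ω).2 o𝒴 ^ max β (2 * β - 2)) ∂μ)))) :
    Tendsto (fun n => hDCMeasure β (Measure.map (Zseq n) μ)) atTop
      (nhds (hDCMeasure β (Measure.map Z μ))) := by
  set s := max β (2 * β - 2) with hs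
  have hs0 : 0 ≤ s := hβ.le.trans (le_max_left _ _)
  have : SecondCountableTopology 𝒳 := UniformSpace.secondCountable_of_separable 𝒳
  have : SecondCountableTopology 𝒴 := UniformSpace.secondCountable_of_separable 𝒴
  -- weak convergence of the laws
  let ν : ProbabilityMeasure (𝒳 × 𝒴) :=
    ⟨Measure.map Z μ, Measure.isProbabilityMeasure_map hZm.aemeasurable⟩
  let νs : ℕ → ProbabilityMeasure (𝒳 × 𝒴) := fun n =>
    ⟨Measure.map (Zseq n) μ, Measure.isProbabilityMeasure_map (hZseqm n).aemeasurable⟩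
  have hw : Tendsto νs atTop (nhds ν) := by
    rw [ProbabilityMeasure.tendsto_iff_forall_integral_tendsto]
    intro g
    have h1 : ∀ W : Ω → 𝒳 × 𝒴, Measurable W →
        ∫ z, g z ∂(Measure.map W μ) = ∫ ω, g (W ω) ∂μ := fun W hW =>
      integral_map hW.aemeasurable g.continuous.measurable.aestronglyMeasurable
    change Tendsto (fun n => ∫ z, g z ∂(Measure.map (Zseq n) μ)) atTop
      (nhds (∫ z, g z ∂(Measure.map Z μ)))
    simp_rw [h1 Z hZm, fun n => h1 (Zseq n) (hZseqm n)]
    exact hconv g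
  have hmap : ∀ f : 𝒳 × 𝒴 → ℝ, Continuous f → ∀ W : Ω → 𝒳 × 𝒴, Measurable W →
      ∫⁻ z, ENNReal.ofReal (f z) ∂(Measure.map W μ) = ∫⁻ ω, ENNReal.ofReal (f (W ω)) ∂μ :=
    fun f hf W hW => lintegral_map (hf.measurable.ennreal_ofReal) hW
  have hfX : Continuous fun z : 𝒳 × 𝒴 => dist z.1 o𝒳 ^ s :=
    (continuous_fst.dist continuous_const).rpow_const fun _ => Or.inr hs0
  have hfY : Continuous fun z : 𝒳 × 𝒴 => dist z.2 o𝒴 ^ s :=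
    (continuous_snd.dist continuous_const).rpow_const fun _ => Or.inr hs0
  have hfX0 : ∀ z : 𝒳 × 𝒴, 0 ≤ dist z.1 o𝒳 ^ s := fun z => Real.rpow_nonneg dist_nonneg _
  have hfY0 : ∀ z : 𝒳 × 𝒴, 0 ≤ dist z.2 o𝒴 ^ s := fun z => Real.rpow_nonneg dist_nonneg _
  have hfat : ∀ f : 𝒳 × 𝒴 → ℝ, Continuous f → (∀ z, 0 ≤ f z) →
      ∫⁻ ω, ENNReal.ofReal (f (Z ω)) ∂μ ≤
        atTop.liminf (fun n => ∫⁻ ω, ENNReal.ofReal (f (Zseq n ω)) ∂μ) := by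
    intro f hf hf0
    have := aux_fatou hw hf hf0
    change ∫⁻ z, ENNReal.ofReal (f z) ∂(Measure.map Z μ) ≤
      atTop.liminf (fun n => ∫⁻ z, ENNReal.ofReal (f z) ∂(Measure.map (Zseq n) μ)) at this
    simp_rw [hmap f hf Z hZm, fun n => hmap f hf (Zseq n) (hZseqm n)] at this
    exact this
  -- case (i) reduces to case (ii)
  obtain ⟨mX, mY, tX, tY⟩ :
      (∫⁻ ω, ENNReal.ofReal (dist (Z ω).1 o𝒳 ^ s) ∂μ < ⊤) ∧
        (∫⁻ ω, ENNReal.ofReal (dist (Z ω).2 o𝒴 ^ s) ∂μ < ⊤) ∧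
        Tendsto (fun n => ∫⁻ ω, ENNReal.ofReal (dist (Zseq n ω).1 o𝒳 ^ s) ∂μ)
          atTop (nhds (∫⁻ ω, ENNReal.ofReal (dist (Z ω).1 o𝒳 ^ s) ∂μ)) ∧
        Tendsto (fun n => ∫⁻ ω, ENNReal.ofReal (dist (Zseq n ω).2 o𝒴 ^ s) ∂μ)
          atTop (nhds (∫⁻ ω, ENNReal.ofReal (dist (Z ω).2 o𝒴 ^ s) ∂μ)) := by
    rcases hmoment with ⟨hX, hY⟩ | h
    · obtain ⟨a1, a2⟩ := aux_ui μ Z Zseq hZm hZseqm hconv hfX hfX0 (hfat _ hfX hfX0) hX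
      obtain ⟨b1, b2⟩ := aux_ui μ Z Zseq hZm hZseqm hconv hfY hfY0 (hfat _ hfY hfY0) hY
      exact ⟨a1, b1, a2, b2⟩
    · exact h
  -- the weight
  let w : 𝒳 × 𝒴 → ℝ := fun z => 2 + (dist z.1 o𝒳 ^ s + dist z.2 o𝒴 ^ s)
  have hwc : Continuous w := continuous_const.add (hfX.add hfY)
  have hw0 : ∀ z, 0 ≤ w z := fun z => by
    have := hfX0 z
    have := hfY0 z
    change 0 ≤ 2 + (dist z.1 o𝒳 ^ s + dist z.2 o𝒴 ^ s)
    linarith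
  have hwint : ∀ W : Ω → 𝒳 × 𝒴, Measurable W → ∫⁻ z, ENNReal.ofReal (w z) ∂(Measure.map W μ) =
      2 + (∫⁻ ω, ENNReal.ofReal (dist (W ω).1 o𝒳 ^ s) ∂μ +
        ∫⁻ ω, ENNReal.ofReal (dist (W ω).2 o𝒴 ^ s) ∂μ) := by
    intro W hW
    rw [hmap w hwc W hW]
    have e : ∀ ω, ENNReal.ofReal (w (W ω)) = 2 + (ENNReal.ofReal (dist (W ω).1 o𝒳 ^ s) +
        ENNReal.ofReal (dist (W ω).2 o𝒴 ^ s)) := by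
      intro ω
      change ENNReal.ofReal (2 + (dist (W ω).1 o𝒳 ^ s + dist (W ω).2 o𝒴 ^ s)) = _
      rw [ENNReal.ofReal_add (by norm_num) (add_nonneg (hfX0 _) (hfY0 _)),
        ENNReal.ofReal_add (hfX0 _) (hfY0 _)]
      simp
    have hmX : Measurable fun ω => ENNReal.ofReal (dist (W ω).1 o𝒳 ^ s) :=
      (hfX.measurable.comp hW).ennreal_ofReal
    simp_rw [e]
    rw [lintegral_add_left measurable_const, lintegral_add_left hmX]
    simp
  have hwfin : ∫⁻ z, ENNReal.ofReal (w z) ∂(ν : Measure (𝒳 × 𝒴)) < ⊤ := by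
    change ∫⁻ z, ENNReal.ofReal (w z) ∂(Measure.map Z μ) < ⊤
    rw [hwint Z hZm]
    exact ENNReal.add_lt_top.2 ⟨by simp, ENNReal.add_lt_top.2 ⟨mX, mY⟩⟩
  have hwt : Tendsto (fun n => ∫⁻ z, ENNReal.ofReal (w z) ∂(νs n : Measure (𝒳 × 𝒴))) atTop
      (nhds (∫⁻ z, ENNReal.ofReal (w z) ∂(ν : Measure (𝒳 × 𝒴)))) := by
    change Tendsto (fun n => ∫⁻ z, ENNReal.ofReal (w z) ∂(Measure.map (Zseq n) μ)) atTop
      (nhds (∫⁻ z, ENNReal.ofReal (w z) ∂(Measure.map Z μ)))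
    simp_rw [hwint Z hZm, fun n => hwint (Zseq n) (hZseqm n)]
    exact tendsto_const_nhds.add (tX.add tY)
  -- product convergence
  have hpi : Tendsto (fun n => ProbabilityMeasure.pi (fun _ : Fin 4 => νs n)) atTop
      (nhds (ProbabilityMeasure.pi (fun _ : Fin 4 => ν))) :=
    (ProbabilityMeasure.continuous_pi.tendsto _).comp (tendsto_pi_nhds.2 fun _ => hw)
  obtain ⟨K₁, hK₁, b₁⟩ := aux_hbound β hβ
  obtain ⟨K₂, hK₂, b₂⟩ := aux_hbound β hβ
  have hrc : ∀ (f g : (Fin 4 → 𝒳 × 𝒴) → 𝒳), Continuous f → Continuous g →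
      Continuous fun z => dist (f z) (g z) ^ β := fun f g hf hg =>
    (hf.dist hg).rpow_const fun _ => Or.inr hβ.le
  have hrc' : ∀ (f g : (Fin 4 → 𝒳 × 𝒴) → 𝒴), Continuous f → Continuous g →
      Continuous fun z => dist (f z) (g z) ^ β := fun f g hf hg =>
    (hf.dist hg).rpow_const fun _ => Or.inr hβ.le
  refine Tendsto.const_mul _ ?_
  refine aux_dct hpi (H := fun z => (K₁ + K₂) * ((w (z 0) + w (z 2)) * (w (z 1) + w (z 3))))
    ?_ (by fun_prop) ?_ ?_ ?_
  · refine Continuous.mul (Continuous.sub (Continuous.add (Continuous.sub ?_ ?_) ?_) ?_)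
      (Continuous.sub (Continuous.add (Continuous.sub ?_ ?_) ?_) ?_)
    iterate 4 exact hrc _ _ (by fun_prop) (by fun_prop)
    iterate 4 exact hrc' _ _ (by fun_prop) (by fun_prop)
  · intro z
    have c₁ := b₁ o𝒳 (z 0).1 (z 1).1 (z 2).1 (z 3).1
    have c₂ := b₂ o𝒴 (z 0).2 (z 1).2 (z 2).2 (z 3).2
    rw [← hs] at c₁ c₂
    set p := dist (z 0).1 (z 1).1 ^ β - dist (z 1).1 (z 2).1 ^ β
      + dist (z 2).1 (z 3).1 ^ β - dist (z 3).1 (z 0).1 ^ β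
    set q := dist (z 0).2 (z 1).2 ^ β - dist (z 1).2 (z 2).2 ^ β
      + dist (z 2).2 (z 3).2 ^ β - dist (z 3).2 (z 0).2 ^ β
    have hX1 : ∀ i, 1 + dist (z i).1 o𝒳 ^ s ≤ w (z i) := fun i => by
      have := hfY0 (z i)
      change _ ≤ 2 + (dist (z i).1 o𝒳 ^ s + dist (z i).2 o𝒴 ^ s)
      linarith
    have hY1 : ∀ i, 1 + dist (z i).2 o𝒴 ^ s ≤ w (z i) := fun i => by
      have := hfX0 (z i)
      change _ ≤ 2 + (dist (z i).1 o𝒳 ^ s + dist (z i).2 o𝒴 ^ s)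
      linarith
    have n0 : ∀ i, 0 ≤ 1 + dist (z i).1 o𝒳 ^ s := fun i => by linarith [hfX0 (z i)]
    have n1 : ∀ i, 0 ≤ 1 + dist (z i).2 o𝒴 ^ s := fun i => by linarith [hfY0 (z i)]
    have d₁ : p ^ 2 ≤ K₁ * ((w (z 0) + w (z 2)) * (w (z 1) + w (z 3))) :=
      c₁.trans (mul_le_mul_of_nonneg_left (mul_le_mul (add_le_add (hX1 0) (hX1 2))
        (add_le_add (hX1 1) (hX1 3)) (add_nonneg (n0 1) (n0 3))
        (add_nonneg (hw0 _) (hw0 _))) hK₁)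
    have d₂ : q ^ 2 ≤ K₂ * ((w (z 0) + w (z 2)) * (w (z 1) + w (z 3))) :=
      c₂.trans (mul_le_mul_of_nonneg_left (mul_le_mul (add_le_add (hY1 0) (hY1 2))
        (add_le_add (hY1 1) (hY1 3)) (add_nonneg (n1 1) (n1 3))
        (add_nonneg (hw0 _) (hw0 _))) hK₂)
    have e0 : |p * q| ≤ p ^ 2 + q ^ 2 := by
      rw [abs_le]; constructor <;> nlinarith [sq_nonneg (p + q), sq_nonneg (p - q)]
    change |p * q| ≤ (K₁ + K₂) * ((w (z 0) + w (z 2)) * (w (z 1) + w (z 3)))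
    linarith
  · rw [ProbabilityMeasure.toMeasure_pi, aux_prod _ hwc.measurable hw0 (add_nonneg hK₁ hK₂)]
    have := ENNReal.add_lt_top.2 ⟨hwfin, hwfin⟩
    exact ENNReal.mul_lt_top ENNReal.ofReal_lt_top (ENNReal.mul_lt_top this this)
  · simp_rw [ProbabilityMeasure.toMeasure_pi,
      aux_prod _ hwc.measurable hw0 (add_nonneg hK₁ hK₂)]
    have hne := (ENNReal.add_lt_top.2 ⟨hwfin, hwfin⟩).ne
    refine ENNReal.Tendsto.const_mul ?_ (Or.inr ENNReal.ofReal_ne_top)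
    exact ENNReal.Tendsto.mul (hwt.add hwt) (Or.inr hne) (hwt.add hwt) (Or.inr hne)
end
end
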